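/- arXiv:2510.11158 — 3 statements merged into one kernel-verified Lean document; each statement's English description precedes it below -/
import Mathlib

section
/- V is twice continuously differentiable on ℝ × ℝ^d, and for every (x,y) ∈ ℝ × ℝ^d one has (L V)(x,y) + c(x,y) − λ(y) = ∫_α^x [ (L̂ U)(z,y) + b_x(z,y)·U(z,y) + c_x(z,y) ] dz. -/
open MeasureTheory

/-- Partial derivative in the first (scalar) variable. -/
noncomputable def pdx {d : ℕ} (f : ℝ × (Fin d → ℝ) → ℝ) (p : ℝ × (Fin d → ℝ)) : ℝ :=
  deriv (fun x => f (x, p.2)) p.1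

/-- Partial derivative in the `i`-th coordinate of the second variable. -/
noncomputable def pdy {d : ℕ} (i : Fin d) (f : ℝ × (Fin d → ℝ) → ℝ) (p : ℝ × (Fin d → ℝ)) : ℝ :=
  deriv (fun t => f (p.1, Function.update p.2 i t)) (p.2 i)

/-- `(ρζ)_i(y) = ∑_j ρ_j ζ_{ij}(y)`. -/
noncomputable def rzeta {d : ℕ} (ζ : (Fin d → ℝ) → Fin d → Fin d → ℝ) (ρ : Fin d → ℝ)
    (y : Fin d → ℝ) (i : Fin d) : ℝ := ∑ j, ρ j * ζ y i j

/-- `a(y) = ζ(y) ζ(y)ᵀ`. -/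
noncomputable def amat {d : ℕ} (ζ : (Fin d → ℝ) → Fin d → Fin d → ℝ)
    (y : Fin d → ℝ) (i j : Fin d) : ℝ := ∑ k, ζ y i k * ζ y j k

/-- The generator `L̂` of the auxiliary process `(X̂, Ŷ)`, applied to `U`. -/
noncomputable def genHat {d : ℕ} (b σ' : ℝ × (Fin d → ℝ) → ℝ)
    (η : (Fin d → ℝ) → Fin d → ℝ) (ζ : (Fin d → ℝ) → Fin d → Fin d → ℝ) (ρ : Fin d → ℝ)
    (U : ℝ × (Fin d → ℝ) → ℝ) (p : ℝ × (Fin d → ℝ)) : ℝ :=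
  (b p + σ' p * pdx σ' p) * pdx U p
    + (1 / 2) * (σ' p) ^ 2 * pdx (pdx U) p
    + ∑ i, (η p.2 i + pdx σ' p * rzeta ζ ρ p.2 i) * pdy i U p
    + (1 / 2) * ∑ i, ∑ j, amat ζ p.2 i j * pdy i (pdy j U) p
    + σ' p * ∑ i, rzeta ζ ρ p.2 i * pdy i (pdx U) p

/-- The generator `L` of the uncontrolled process `(X⁰, Y)`, applied to `V`. -/
noncomputable def gen {d : ℕ} (b σ' : ℝ × (Fin d → ℝ) → ℝ)
    (η : (Fin d → ℝ) → Fin d → ℝ) (ζ : (Fin d → ℝ) → Fin d → Fin d → ℝ) (ρ : Fin d → ℝ)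
    (V : ℝ × (Fin d → ℝ) → ℝ) (p : ℝ × (Fin d → ℝ)) : ℝ :=
  b p * pdx V p
    + (1 / 2) * (σ' p) ^ 2 * pdx (pdx V) p
    + ∑ i, η p.2 i * pdy i V p
    + (1 / 2) * ∑ i, ∑ j, amat ζ p.2 i j * pdy i (pdy j V) p
    + σ' p * ∑ i, rzeta ζ ρ p.2 i * pdy i (pdx V) p

/-!
Write `U = V_x`. The terms of `L V + c` containing an `x`-derivative, together with `c`, depend on
`U` alone and form the flux `F = c + U b + ½ σ² U_x + σ ∑ᵢ (ρζ)ᵢ U_{yᵢ}`, with `λ(y) = F(α, y)`. The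
rest of `L V` is `A V`, where the generator `A` of `Y` acts in `y` only and therefore commutes with
integration in `x`. Since `F_x + A U = L̂ U + b_x U + c_x`, integrating from `α` to `x` gives
`F(x, y) - F(α, y) + (A V)(x, y)`, which is `L V + c - λ`.
-/

universe u

section ParametricIntegral

open Set Topology

variable {H E : Type*} [NormedAddCommGroup H] [NormedSpace ℝ H] [NormedAddCommGroup E]
  [NormedSpace ℝ E] {μ : Measure ℝ} [IsLocallyFiniteMeasure μ] {a b : ℝ}

theorem exists_eventually_forall_norm_le_of_isCompact {X T G : Type*} [TopologicalSpace X]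
    [TopologicalSpace T] [SeminormedAddCommGroup G] {f : X → T → G}
    (hf : Continuous (Function.uncurry f)) {K : Set T} (hK : IsCompact K) (x₀ : X) :
    ∃ C, ∀ᶠ x in 𝓝 x₀, ∀ t ∈ K, ‖f x t‖ ≤ C := by
  obtain ⟨C, hC⟩ := hK.exists_bound_of_continuousOn (hf.uncurry_left x₀).continuousOn
  refine ⟨C + 1, hK.eventually_forall_of_forall_eventually fun t ht => ?_⟩
  have hlt : ‖f x₀ t‖ < C + 1 := (hC t ht).trans_lt (lt_add_one C)
  exact (hf.norm.continuousAt.eventually (gt_mem_nhds hlt)).mono fun _ h => h.le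

theorem continuous_intervalIntegral_of_continuous {X : Type*} [TopologicalSpace X]
    [FirstCountableTopology X] {F : X → ℝ → E} (hF : Continuous (Function.uncurry F)) :
    Continuous fun x => ∫ t in a..b, F x t ∂μ := by
  refine continuous_iff_continuousAt.2 fun x₀ => ?_
  obtain ⟨C, hC⟩ :=
    exists_eventually_forall_norm_le_of_isCompact hF (isCompact_uIcc (a := a) (b := b)) x₀
  exact intervalIntegral.continuousAt_of_dominated_interval (bound := fun _ => C)
    (.of_forall fun x => (hF.uncurry_left x).aestronglyMeasurable)
    (hC.mono fun x hx => .of_forall fun t ht => hx t (uIoc_subset_uIcc ht))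
    intervalIntegrable_const (.of_forall fun t _ => (hF.uncurry_right t).continuousAt)

theorem hasFDerivAt_intervalIntegral_of_continuous {F : H → ℝ → E} {F' : H → ℝ → H →L[ℝ] E}
    (hF : ∀ x, Continuous (F x)) (hF' : Continuous (Function.uncurry F'))
    (hFF' : ∀ x t, HasFDerivAt (fun x => F x t) (F' x t) x) (x₀ : H) :
    HasFDerivAt (fun x => ∫ t in a..b, F x t ∂μ) (∫ t in a..b, F' x₀ t ∂μ) x₀ := by
  obtain ⟨C, hC⟩ :=
    exists_eventually_forall_norm_le_of_isCompact hF' (isCompact_uIcc (a := a) (b := b)) x₀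
  exact intervalIntegral.hasFDerivAt_integral_of_dominated_of_fderiv_le (bound := fun _ => C) hC
    (.of_forall fun x => (hF x).aestronglyMeasurable) ((hF x₀).intervalIntegrable a b)
    (hF'.uncurry_left x₀).aestronglyMeasurable
    (.of_forall fun t ht x hx => hx t (uIoc_subset_uIcc ht)) intervalIntegrable_const
    (.of_forall fun t _ x _ => hFF' x t)

theorem hasDerivAt_intervalIntegral_of_continuous {F F' : ℝ → ℝ → E}
    (hF : ∀ x, Continuous (F x)) (hF' : Continuous (Function.uncurry F'))
    (hFF' : ∀ x t, HasDerivAt (fun x => F x t) (F' x t) x) (x₀ : ℝ) :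
    HasDerivAt (fun x => ∫ t in a..b, F x t ∂μ) (∫ t in a..b, F' x₀ t ∂μ) x₀ := by
  let L : E →L[ℝ] ℝ →L[ℝ] E :=
    (ContinuousLinearMap.toSpanSingletonCLE (𝕜 := ℝ)).toContinuousLinearMap
  have hL : Continuous (Function.uncurry fun x t => L (F' x t)) := L.continuous.comp hF'
  have h := (hasFDerivAt_intervalIntegral_of_continuous (μ := μ) (a := a) (b := b) hF hL
    (fun x t => (hFF' x t).hasFDerivAt) x₀).hasDerivAt
  rw [ContinuousLinearMap.intervalIntegral_apply
    ((hL.uncurry_left x₀).intervalIntegrable a b)] at h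
  simpa [L] using h

theorem contDiff_intervalIntegral {H E : Type u} [NormedAddCommGroup H] [NormedSpace ℝ H]
    [NormedAddCommGroup E] [NormedSpace ℝ E] {F : H → ℝ → E} {n : ℕ∞}
    (hF : ContDiff ℝ n (Function.uncurry F)) : ContDiff ℝ n fun x => ∫ t in a..b, F x t ∂μ := by
  rw [contDiff_iff_forall_nat_le] at hF ⊢
  intro m hm
  replace hF := hF m hm
  clear hm
  induction m generalizing E with
  | zero => exact contDiff_zero.2 (continuous_intervalIntegral_of_continuous hF.continuous)
  | succ m ih =>
    let F' : H → ℝ → H →L[ℝ] E := fun x t =>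
      (fderiv ℝ (Function.uncurry F) (x, t)).comp (ContinuousLinearMap.inl ℝ H ℝ)
    have hF' : ContDiff ℝ m (Function.uncurry F') :=
      (hF.fderiv_right (m := m) (by simp)).clm_comp contDiff_const
    have hFF' (x : H) (t : ℝ) : HasFDerivAt (fun x => F x t) (F' x t) x := by
      have hF_total := (hF.differentiable (by simp) (x, t)).hasFDerivAt
      exact hF_total.comp x (f := fun x => (x, t)) (hasFDerivAt_prodMk_left x t)
    exact contDiff_succ_iff_hasFDerivAt.2 ⟨_, ih hF', hasFDerivAt_intervalIntegral_of_continuous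
      hF.continuous.uncurry_left hF'.continuous hFF'⟩

end ParametricIntegral

section Primitive

variable {E G : Type*} [NormedAddCommGroup G] [NormedSpace ℝ G]

/-- The primitive of `f` in its first variable that vanishes at `α`; the function `V` of the
pseudo-potential construction is `xPrimitive α U`. -/
noncomputable def xPrimitive (α : ℝ) (f : ℝ × E → G) (p : ℝ × E) : G :=
  ∫ z in α..p.1, f (z, p.2)

-- The fixed limits make the right-hand side a parametric integral in all of `p`.
theorem xPrimitive_eq_smul_integral_unitInterval (α : ℝ) (f : ℝ × E → G) (p : ℝ × E) :
    xPrimitive α f p = (p.1 - α) • ∫ t in (0 : ℝ)..1, f ((p.1 - α) * t + α, p.2) := by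
  simp [xPrimitive, intervalIntegral.smul_integral_comp_mul_add (fun z => f (z, p.2))]

theorem contDiff_xPrimitive {E G : Type u} [NormedAddCommGroup E] [NormedSpace ℝ E]
    [NormedAddCommGroup G] [NormedSpace ℝ G] {f : ℝ × E → G} {n : ℕ∞} (hf : ContDiff ℝ n f)
    (α : ℝ) : ContDiff ℝ n (xPrimitive α f) := by
  rw [funext (xPrimitive_eq_smul_integral_unitInterval α f)]
  refine (contDiff_fst.sub contDiff_const).smul (contDiff_intervalIntegral ?_)
  exact hf.comp (by fun_prop)

end Primitive

section PartialDerivatives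

variable {d : ℕ} {f : ℝ × (Fin d → ℝ) → ℝ} {m n : WithTop ℕ∞}

theorem hasDerivAt_pdx (hf : Differentiable ℝ f) (x : ℝ) (y : Fin d → ℝ) :
    HasDerivAt (fun z => f (z, y)) (pdx f (x, y)) x :=
  (hf.comp (by fun_prop : Differentiable ℝ fun z => (z, y)) x).hasDerivAt

theorem hasDerivAt_pdy (hf : Differentiable ℝ f) (i : Fin d) (x : ℝ) (y : Fin d → ℝ) (t : ℝ) :
    HasDerivAt (fun s => f (x, Function.update y i s)) (pdy i f (x, Function.update y i t)) t := by
  have hupdate : Differentiable ℝ (Function.update y i) :=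
    fun s => (hasDerivAt_update y i s).differentiableAt
  have hslice : Differentiable ℝ fun s => f (x, Function.update y i s) :=
    hf.comp ((differentiable_const x).prodMk hupdate)
  simpa [pdy] using hslice t

theorem pdx_eq_fderiv (hf : Differentiable ℝ f) : pdx f = fun p => fderiv ℝ f p (1, 0) :=
  funext fun p => ((hf p).hasFDerivAt.comp_hasDerivAt p.1
    ((hasDerivAt_id p.1).prodMk (hasDerivAt_const p.1 p.2))).deriv

theorem pdy_eq_fderiv (hf : Differentiable ℝ f) (i : Fin d) :
    pdy i f = fun p => fderiv ℝ f p (0, Pi.single i 1) :=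
  funext fun p => ((hf p).hasFDerivAt.comp_hasDerivAt_of_eq (p.2 i)
    ((hasDerivAt_const (p.2 i) p.1).prodMk (hasDerivAt_update p.2 i (p.2 i))) (by simp)).deriv

theorem contDiff_pdx (hf : ContDiff ℝ n f) (hmn : m + 1 ≤ n) : ContDiff ℝ m (pdx f) := by
  rw [pdx_eq_fderiv ((hf.of_le hmn).differentiable (by simp))]
  exact (hf.fderiv_right hmn).clm_apply contDiff_const

theorem contDiff_pdy (hf : ContDiff ℝ n f) (hmn : m + 1 ≤ n) (i : Fin d) :
    ContDiff ℝ m (pdy i f) := by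
  rw [pdy_eq_fderiv ((hf.of_le hmn).differentiable (by simp))]
  exact (hf.fderiv_right hmn).clm_apply contDiff_const

theorem continuous_pdy (hf : ContDiff ℝ 1 f) (i : Fin d) : Continuous (pdy i f) :=
  (contDiff_pdy (m := 0) hf (zero_add 1).le i).continuous

theorem pdx_pdy_comm (hf : ContDiff ℝ 2 f) (i : Fin d) : pdx (pdy i f) = pdy i (pdx f) := by
  have hf' : Differentiable ℝ f := hf.differentiable two_ne_zero
  have hdd : Differentiable ℝ (fderiv ℝ f) :=
    (hf.fderiv_right (m := 1) one_add_one_eq_two.le).differentiable one_ne_zero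
  rw [pdx_eq_fderiv ((contDiff_pdy hf one_add_one_eq_two.le i).differentiable one_ne_zero),
    pdy_eq_fderiv ((contDiff_pdx hf one_add_one_eq_two.le).differentiable one_ne_zero),
    pdx_eq_fderiv hf', pdy_eq_fderiv hf']
  funext p
  have hsymm : IsSymmSndFDerivAt ℝ f p := hf.contDiffAt.isSymmSndFDerivAt (by simp)
  have hsnd (v w : ℝ × (Fin d → ℝ)) :
      fderiv ℝ (fun q => fderiv ℝ f q v) p w = fderiv ℝ (fderiv ℝ f) p w v := by
    simp [fderiv_clm_apply (hdd p) (differentiableAt_const v)]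
  rw [hsnd, hsnd, hsymm]

theorem integral_pdx {y : Fin d → ℝ} (hf : ContDiff ℝ 1 fun z => f (z, y)) (α x : ℝ) :
    ∫ z in α..x, pdx f (z, y) = f (x, y) - f (α, y) :=
  intervalIntegral.integral_deriv_eq_sub (fun z _ => hf.differentiable one_ne_zero z)
    ((hf.continuous_deriv le_rfl).intervalIntegrable α x)

theorem pdx_xPrimitive (hf : Continuous f) (α : ℝ) : pdx (xPrimitive α f) = f :=
  funext fun p => (hf.comp (by fun_prop : Continuous fun z => (z, p.2))).deriv_integral _ α p.1

theorem pdy_xPrimitive (hf : ContDiff ℝ 1 f) (i : Fin d) (α : ℝ) :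
    pdy i (xPrimitive α f) = xPrimitive α (pdy i f) := by
  funext p
  have h := hasDerivAt_intervalIntegral_of_continuous (μ := volume) (a := α) (b := p.1)
    (F := fun t z => f (z, Function.update p.2 i t))
    (F' := fun t z => pdy i f (z, Function.update p.2 i t))
    (fun t => hf.continuous.comp (by fun_prop)) ((continuous_pdy hf i).comp (by fun_prop))
    (fun t z => hasDerivAt_pdy (hf.differentiable one_ne_zero) i z p.2 t) (p.2 i)
  simpa only [pdy, xPrimitive, Function.update_eq_self] using h.deriv

end PartialDerivatives

section Generators

variable {d : ℕ} {b σ c U : ℝ × (Fin d → ℝ) → ℝ} (η : (Fin d → ℝ) → Fin d → ℝ)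
  (ζ : (Fin d → ℝ) → Fin d → Fin d → ℝ) (ρ : Fin d → ℝ)

/-- The generator `A` of the factor process `Y`, acting on the second variable of `f`. -/
noncomputable def genY (f : ℝ × (Fin d → ℝ) → ℝ) (p : ℝ × (Fin d → ℝ)) : ℝ :=
  ∑ i, η p.2 i * pdy i f p + (1 / 2) * ∑ i, ∑ j, amat ζ p.2 i j * pdy i (pdy j f) p

/-- The `x`-flux of `U`: if `U = V_x`, `c` plus the terms of `L V` that contain an
`x`-derivative. Its value at `x = α` is the paper's `λ`. -/
noncomputable def xFlux (b σ c U : ℝ × (Fin d → ℝ) → ℝ) (p : ℝ × (Fin d → ℝ)) : ℝ :=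
  c p + U p * b p + (1 / 2) * (σ p) ^ 2 * pdx U p + σ p * ∑ i, rzeta ζ ρ p.2 i * pdy i U p

theorem gen_add_eq_xFlux_add_genY (b σ c V : ℝ × (Fin d → ℝ) → ℝ) (p : ℝ × (Fin d → ℝ)) :
    gen b σ η ζ ρ V p + c p = xFlux ζ ρ b σ c (pdx V) p + genY η ζ V p := by
  simp only [gen, xFlux, genY]
  ring

theorem continuous_genY_left (hU : ContDiff ℝ 2 U) (y : Fin d → ℝ) :
    Continuous fun z => genY η ζ U (z, y) := by
  have hUy (i) : ContDiff ℝ 1 (pdy i U) := contDiff_pdy hU one_add_one_eq_two.le i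
  have hUyy (i j) : Continuous (pdy i (pdy j U)) := continuous_pdy (hUy j) i
  simp only [genY]
  fun_prop

theorem genY_xPrimitive (hU : ContDiff ℝ 2 U) (α : ℝ) (p : ℝ × (Fin d → ℝ)) :
    genY η ζ (xPrimitive α U) p = xPrimitive α (genY η ζ U) p := by
  have hUy (i) : ContDiff ℝ 1 (pdy i U) := contDiff_pdy hU one_add_one_eq_two.le i
  have hUyy (i j) : Continuous (pdy i (pdy j U)) := continuous_pdy (hUy j) i
  have hdrift (i) : Continuous fun z => η p.2 i * pdy i U (z, p.2) := by fun_prop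
  have hdiffusion (i j) : Continuous fun z => amat ζ p.2 i j * pdy i (pdy j U) (z, p.2) := by
    fun_prop
  have hdiffusion_sum (i) := continuous_finsetSum Finset.univ fun j _ => hdiffusion i j
  have hdrift_integral : ∫ z in α..p.1, ∑ i, η p.2 i * pdy i U (z, p.2)
      = ∑ i, η p.2 i * xPrimitive α (pdy i U) p := by
    rw [intervalIntegral.integral_finsetSum fun i _ => (hdrift i).intervalIntegrable _ _]
    simp only [intervalIntegral.integral_const_mul, xPrimitive]
  have hdiffusion_integral : ∫ z in α..p.1, ∑ i, ∑ j, amat ζ p.2 i j * pdy i (pdy j U) (z, p.2)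
      = ∑ i, ∑ j, amat ζ p.2 i j * xPrimitive α (pdy i (pdy j U)) p := by
    rw [intervalIntegral.integral_finsetSum fun i _ => (hdiffusion_sum i).intervalIntegrable _ _]
    refine Finset.sum_congr rfl fun i _ => ?_
    rw [intervalIntegral.integral_finsetSum fun j _ => (hdiffusion i j).intervalIntegrable _ _]
    simp only [intervalIntegral.integral_const_mul, xPrimitive]
  rw [xPrimitive.eq_def α (genY η ζ U)]
  simp only [genY, pdy_xPrimitive (hU.of_le one_le_two), pdy_xPrimitive (hUy _)]
  rw [intervalIntegral.integral_add (Continuous.intervalIntegrable (by fun_prop) _ _)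
    (Continuous.intervalIntegrable (by fun_prop) _ _), intervalIntegral.integral_const_mul,
    hdrift_integral, hdiffusion_integral]

-- As `ζ` is arbitrary, the flux need not be regular, or even continuous, in `y`.
theorem contDiff_xFlux_left (hb : ContDiff ℝ 1 b) (hσ : ContDiff ℝ 1 σ) (hc : ContDiff ℝ 1 c)
    (hU : ContDiff ℝ 2 U) (y : Fin d → ℝ) : ContDiff ℝ 1 fun z => xFlux ζ ρ b σ c U (z, y) := by
  have hU₁ : ContDiff ℝ 1 U := hU.of_le one_le_two
  have hUx : ContDiff ℝ 1 (pdx U) := contDiff_pdx hU one_add_one_eq_two.le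
  have hUy (i) : ContDiff ℝ 1 (pdy i U) := contDiff_pdy hU one_add_one_eq_two.le i
  simp only [xFlux]
  fun_prop

theorem pdx_xFlux_add_genY (hb : ContDiff ℝ 1 b) (hσ : ContDiff ℝ 1 σ) (hc : ContDiff ℝ 1 c)
    (hU : ContDiff ℝ 2 U) (p : ℝ × (Fin d → ℝ)) :
    pdx (xFlux ζ ρ b σ c U) p + genY η ζ U p
      = genHat b σ η ζ ρ U p + pdx b p * U p + pdx c p := by
  obtain ⟨x, y⟩ := p
  have hslice {f : ℝ × (Fin d → ℝ) → ℝ} (hf : ContDiff ℝ 1 f) :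
      HasDerivAt (fun z => f (z, y)) (pdx f (x, y)) x :=
    hasDerivAt_pdx (hf.differentiable one_ne_zero) x y
  have hUy (i) : ContDiff ℝ 1 (pdy i U) := contDiff_pdy hU one_add_one_eq_two.le i
  have hdrift := (hslice (hU.of_le one_le_two)).mul (hslice hb)
  have hdiffusion := (((hslice hσ).fun_pow 2).const_mul (1 / 2)).mul
    (hslice (contDiff_pdx hU one_add_one_eq_two.le))
  have hcross := (hslice hσ).mul (HasDerivAt.fun_sum (u := Finset.univ) fun i _ =>
    (hslice (hUy i)).const_mul (rzeta ζ ρ y i))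
  have hflux := (((hslice hc).add hdrift).add hdiffusion).add hcross
  rw [show pdx (xFlux ζ ρ b σ c U) (x, y) = _ from hflux.deriv]
  simp only [genHat, genY, pdx_pdy_comm hU, add_mul, Finset.sum_add_distrib, mul_assoc,
    ← Finset.mul_sum]
  ring

end Generators

theorem statement0 {d : ℕ} (hd : 1 ≤ d) (α : ℝ)
    (b σ c : ℝ × (Fin d → ℝ) → ℝ)
    (hb : ContDiff ℝ 1 b) (hσ : ContDiff ℝ 1 σ) (hc : ContDiff ℝ 1 c)
    (η : (Fin d → ℝ) → Fin d → ℝ) (ζ : (Fin d → ℝ) → Fin d → Fin d → ℝ) (ρ : Fin d → ℝ)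
    (U : ℝ × (Fin d → ℝ) → ℝ) (hU : ContDiff ℝ 2 U)
    (V : ℝ × (Fin d → ℝ) → ℝ)
    (hV : ∀ (x : ℝ) (y : Fin d → ℝ), V (x, y) = ∫ z in α..x, U (z, y))
    (lam : (Fin d → ℝ) → ℝ)
    (hlam : ∀ y : Fin d → ℝ, lam y = c (α, y) + U (α, y) * b (α, y)
        + (1 / 2) * (σ (α, y)) ^ 2 * pdx U (α, y)
        + σ (α, y) * ∑ i, rzeta ζ ρ y i * pdy i U (α, y)) :
    ContDiff ℝ 2 V ∧
      ∀ (x : ℝ) (y : Fin d → ℝ),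
        gen b σ η ζ ρ V (x, y) + c (x, y) - lam y
          = ∫ z in α..x,
              (genHat b σ η ζ ρ U (z, y) + pdx b (z, y) * U (z, y) + pdx c (z, y)) := by
  obtain rfl : V = xPrimitive α U := funext fun p => hV p.1 p.2
  refine ⟨contDiff_xPrimitive (n := 2) hU α, fun x y => ?_⟩
  have hflux : ContDiff ℝ 1 fun z => xFlux ζ ρ b σ c U (z, y) :=
    contDiff_xFlux_left ζ ρ hb hσ hc hU y
  calc gen b σ η ζ ρ (xPrimitive α U) (x, y) + c (x, y) - lam y
      = xFlux ζ ρ b σ c U (x, y) - xFlux ζ ρ b σ c U (α, y) + genY η ζ (xPrimitive α U) (x, y) := by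
        rw [gen_add_eq_xFlux_add_genY, pdx_xPrimitive hU.continuous, hlam, add_sub_right_comm]
        rfl
    _ = (∫ z in α..x, pdx (xFlux ζ ρ b σ c U) (z, y)) + ∫ z in α..x, genY η ζ U (z, y) := by
        rw [integral_pdx hflux, genY_xPrimitive η ζ hU, xPrimitive]
    _ = ∫ z in α..x, (pdx (xFlux ζ ρ b σ c U) (z, y) + genY η ζ U (z, y)) :=
        (intervalIntegral.integral_add ((hflux.continuous_deriv le_rfl).intervalIntegrable α x)
          ((continuous_genY_left η ζ hU y).intervalIntegrable α x)).symm
    _ = _ := by simp only [pdx_xFlux_add_genY η ζ ρ hb hσ hc hU]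
end

section
/- Let F : ℝ × (0,1) → ℝ be twice continuously differentiable and define f : ℝ² → ℝ by f(x,z) := F(x, E(x,z)) with E(x,z) := exp((γ/σ)(z+x)) / (1 + exp((γ/σ)(z+x))). Then for every (x,z) ∈ ℝ²: μ(x,z)·f_x(x,z) + (σ²/2)·f_{xx}(x,z) + q(x,z)·f_z(x,z) = (L F)(x, E(x,z)), where (L F)(x,y) := (m(y) − δx)·F_x(x,y) + (σ²/2)·F_{xx}(x,y) + (λ₂ − (λ₁+λ₂)y)·F_y(x,y) + (γ²/2)·y²(1−y)²·F_{yy}(x,y) + σγ·y(1−y)·F_{xy}(x,y). -/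
/-- Partial derivative in the first variable. -/
noncomputable def pd1 (f : ℝ × ℝ → ℝ) (p : ℝ × ℝ) : ℝ := deriv (fun x => f (x, p.2)) p.1

/-- Partial derivative in the second variable. -/
noncomputable def pd2 (f : ℝ × ℝ → ℝ) (p : ℝ × ℝ) : ℝ := deriv (fun y => f (p.1, y)) p.2

/-- `E(x,z) = exp((γ/σ)(z+x)) / (1 + exp((γ/σ)(z+x)))`. -/
noncomputable def Efun (σ γ : ℝ) (x z : ℝ) : ℝ :=
  Real.exp ((γ / σ) * (z + x)) / (1 + Real.exp ((γ / σ) * (z + x)))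

/-- `m(y) = m₂ + (m₁ - m₂) y`. -/
noncomputable def mfun (m₁ m₂ : ℝ) (y : ℝ) : ℝ := m₂ + (m₁ - m₂) * y

/-- `μ(x,z) = m(E(x,z)) - δ x`. -/
noncomputable def mufun (σ γ δ m₁ m₂ : ℝ) (x z : ℝ) : ℝ :=
  mfun m₁ m₂ (Efun σ γ x z) - δ * x

/-- The drift `q(x,z)` of the finite-variation coordinate `Z`. -/
noncomputable def qfun (σ γ δ lam₁ lam₂ m₁ m₂ : ℝ) (x z : ℝ) : ℝ :=
  σ * γ * (Efun σ γ x z - 1 / 2)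
    + (σ / γ) * (1 + Real.exp (-(γ / σ) * (z + x)))
      * (lam₂ - lam₁ * Real.exp ((γ / σ) * (z + x)))
    - mfun m₁ m₂ (Efun σ γ x z) + δ * x

/-- `z(x,y) = (σ/γ) log(y/(1-y)) - x`. -/
noncomputable def zfun (σ γ : ℝ) (x y : ℝ) : ℝ := (σ / γ) * Real.log (y / (1 - y)) - x

/-!
Along a horizontal line the map `(x, z) ↦ (x, E(x, z))` is the graph of a function of `x`, so two
applications of the chain rule produce every second-order term of `L`, with `E_x` and `E_x²` as
coefficients. Since `E(x, z)` is the sigmoid of `(γ/σ)(z + x)`, both `E_x` and `E_z` equal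
`(γ/σ) E (1 - E)`. What remains is the coefficient of `F_y`: in `q` the term `σγ(E - 1/2)` cancels
the Itô correction `(σ²/2) E_xx`, the term `δx - m(E)` cancels `μ`, and the last one, multiplied by
`E_z`, is the drift `λ₂ - (λ₁ + λ₂) E` of the belief.
-/

open Filter Topology

section PartialDerivatives

variable {F : ℝ × ℝ → ℝ} {p : ℝ × ℝ}

theorem pd1_eq_fderiv (hF : DifferentiableAt ℝ F p) : pd1 F p = fderiv ℝ F p (1, 0) :=
  (hF.hasFDerivAt.comp_hasDerivAt (f := fun x => (x, p.2)) p.1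
    ((hasDerivAt_id p.1).prodMk (hasDerivAt_const p.1 p.2))).deriv

theorem pd2_eq_fderiv (hF : DifferentiableAt ℝ F p) : pd2 F p = fderiv ℝ F p (0, 1) :=
  (hF.hasFDerivAt.comp_hasDerivAt (f := fun y => (p.1, y)) p.2
    ((hasDerivAt_const p.2 p.1).prodMk (hasDerivAt_id p.2))).deriv

theorem eventually_differentiableAt_of_contDiffAt_one (hF : ContDiffAt ℝ 1 F p) :
    ∀ᶠ q in 𝓝 p, DifferentiableAt ℝ F q :=
  (hF.eventually (by simp)).mono fun _ hq => hq.differentiableAt one_ne_zero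

theorem pd1_eventuallyEq_fderiv (hF : ContDiffAt ℝ 1 F p) :
    pd1 F =ᶠ[𝓝 p] fun q => fderiv ℝ F q (1, 0) :=
  (eventually_differentiableAt_of_contDiffAt_one hF).mono fun _ => pd1_eq_fderiv

theorem pd2_eventuallyEq_fderiv (hF : ContDiffAt ℝ 1 F p) :
    pd2 F =ᶠ[𝓝 p] fun q => fderiv ℝ F q (0, 1) :=
  (eventually_differentiableAt_of_contDiffAt_one hF).mono fun _ => pd2_eq_fderiv

theorem contDiffAt_pd1 {m n : WithTop ℕ∞} (hF : ContDiffAt ℝ n F p) (hmn : m + 1 ≤ n) :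
    ContDiffAt ℝ m (pd1 F) p :=
  ((hF.fderiv_right hmn).clm_apply contDiffAt_const).congr_of_eventuallyEq
    (pd1_eventuallyEq_fderiv (hF.of_le (le_add_self.trans hmn)))

theorem contDiffAt_pd2 {m n : WithTop ℕ∞} (hF : ContDiffAt ℝ n F p) (hmn : m + 1 ≤ n) :
    ContDiffAt ℝ m (pd2 F) p :=
  ((hF.fderiv_right hmn).clm_apply contDiffAt_const).congr_of_eventuallyEq
    (pd2_eventuallyEq_fderiv (hF.of_le (le_add_self.trans hmn)))

theorem pd1_pd2_eq_pd2_pd1 (hF : ContDiffAt ℝ 2 F p) : pd1 (pd2 F) p = pd2 (pd1 F) p := by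
  have hF₁ : ContDiffAt ℝ 1 F p := hF.of_le one_le_two
  have h12 : (1 : WithTop ℕ∞) + 1 ≤ 2 := one_add_one_eq_two.le
  have hF' : DifferentiableAt ℝ (fderiv ℝ F) p := (hF.fderiv_right h12).differentiableAt one_ne_zero
  have fderiv_apply (v w : ℝ × ℝ) :
      fderiv ℝ (fun q => fderiv ℝ F q v) p w = fderiv ℝ (fderiv ℝ F) p w v := by
    simp [fderiv_clm_apply hF' (differentiableAt_const v)]
  rw [pd1_eq_fderiv ((contDiffAt_pd2 hF h12).differentiableAt one_ne_zero),
    pd2_eq_fderiv ((contDiffAt_pd1 hF h12).differentiableAt one_ne_zero),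
    (pd2_eventuallyEq_fderiv hF₁).fderiv_eq, (pd1_eventuallyEq_fderiv hF₁).fderiv_eq,
    fderiv_apply, fderiv_apply]
  exact hF.isSymmSndFDerivAt (by simp) (1, 0) (0, 1)

end PartialDerivatives

section ChainRule

variable {F : ℝ × ℝ → ℝ} {g g' : ℝ → ℝ} {x a : ℝ}

theorem hasDerivAt_comp_snd {y : ℝ} (hF : DifferentiableAt ℝ F (y, g x)) (hg : HasDerivAt g a x) :
    HasDerivAt (fun t => F (y, g t)) (pd2 F (y, g x) * a) x :=
  have hFy : HasDerivAt (fun v => F (y, v)) (pd2 F (y, g x)) (g x) :=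
    (hF.comp (g x) ((differentiableAt_const y).prodMk differentiableAt_id)).hasDerivAt
  hFy.comp x hg

theorem hasDerivAt_comp_graph (hF : DifferentiableAt ℝ F (x, g x)) (hg : HasDerivAt g a x) :
    HasDerivAt (fun t => F (t, g t)) (pd1 F (x, g x) + a * pd2 F (x, g x)) x := by
  have hcomp := hF.hasFDerivAt.comp_hasDerivAt (f := fun t => (t, g t)) x
    ((hasDerivAt_id x).prodMk hg)
  have tangent_eq : ((1, a) : ℝ × ℝ) = (1, 0) + a • (0, 1) := by simp
  rw [tangent_eq, map_add, map_smul, smul_eq_mul, ← pd1_eq_fderiv hF, ← pd2_eq_fderiv hF] at hcomp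
  exact hcomp

theorem deriv_comp_graph_eventuallyEq (hF : ContDiffAt ℝ 1 F (x, g x))
    (hg : ∀ᶠ t in 𝓝 x, HasDerivAt g (g' t) t) :
    deriv (fun t => F (t, g t)) =ᶠ[𝓝 x] fun t => pd1 F (t, g t) + g' t * pd2 F (t, g t) := by
  have hgraph : ContinuousAt (fun t => (t, g t)) x :=
    continuousAt_id.prodMk hg.self_of_nhds.continuousAt
  filter_upwards [hg, hgraph.eventually (eventually_differentiableAt_of_contDiffAt_one hF)]
    with t hgt hFt
  exact (hasDerivAt_comp_graph hFt hgt).deriv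

theorem hasDerivAt_deriv_comp_graph (hF : ContDiffAt ℝ 2 F (x, g x))
    (hg : ∀ᶠ t in 𝓝 x, HasDerivAt g (g' t) t) (hg' : HasDerivAt g' a x) :
    HasDerivAt (deriv fun t => F (t, g t))
      (pd1 (pd1 F) (x, g x) + 2 * g' x * pd2 (pd1 F) (x, g x)
        + g' x ^ 2 * pd2 (pd2 F) (x, g x) + a * pd2 F (x, g x)) x := by
  have h12 : (1 : WithTop ℕ∞) + 1 ≤ 2 := one_add_one_eq_two.le
  have hpd1 := hasDerivAt_comp_graph
    ((contDiffAt_pd1 hF h12).differentiableAt one_ne_zero) hg.self_of_nhds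
  have hpd2 := hasDerivAt_comp_graph
    ((contDiffAt_pd2 hF h12).differentiableAt one_ne_zero) hg.self_of_nhds
  refine ((hpd1.add (hg'.mul hpd2)).congr_of_eventuallyEq
    (deriv_comp_graph_eventuallyEq (hF.of_le one_le_two) hg)).congr_deriv ?_
  rw [pd1_pd2_eq_pd2_pd1 hF]
  ring

end ChainRule

section Belief

variable (σ γ x z : ℝ)

theorem Efun_eq_sigmoid : Efun σ γ x z = Real.sigmoid (γ / σ * (z + x)) := by
  rw [Efun, Real.sigmoid_def, Real.exp_neg]
  field_simp
  ring

theorem Efun_comm : Efun σ γ x z = Efun σ γ z x := by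
  rw [Efun, Efun, add_comm]

theorem Efun_mem_Ioo : Efun σ γ x z ∈ Set.Ioo (0 : ℝ) 1 := by
  rw [Efun_eq_sigmoid]
  exact ⟨Real.sigmoid_pos _, Real.sigmoid_lt_one _⟩

theorem hasDerivAt_Efun_left :
    HasDerivAt (fun x => Efun σ γ x z) (γ / σ * (Efun σ γ x z * (1 - Efun σ γ x z))) x := by
  simp only [Efun_eq_sigmoid]
  have hlin : HasDerivAt (fun x => γ / σ * (z + x)) (γ / σ) x := by
    simpa using ((hasDerivAt_id x).const_add z).const_mul (γ / σ)
  exact ((Real.hasDerivAt_sigmoid _).comp x hlin).congr_deriv (mul_comm _ _)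

theorem hasDerivAt_Efun_right :
    HasDerivAt (fun z => Efun σ γ x z) (γ / σ * (Efun σ γ x z * (1 - Efun σ γ x z))) z := by
  simpa only [Efun_comm σ γ x] using hasDerivAt_Efun_left σ γ z x

theorem hasDerivAt_deriv_Efun_left :
    HasDerivAt (fun x => γ / σ * (Efun σ γ x z * (1 - Efun σ γ x z)))
      ((γ / σ) ^ 2 * (Efun σ γ x z * (1 - Efun σ γ x z) * (1 - 2 * Efun σ γ x z))) x := by
  have hE := hasDerivAt_Efun_left σ γ x z
  refine ((hE.mul (hE.const_sub 1)).const_mul (γ / σ)).congr_deriv ?_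
  ring

theorem Efun_mul_one_add_exp_neg : Efun σ γ x z * (1 + Real.exp (-(γ / σ) * (z + x))) = 1 := by
  rw [Efun_eq_sigmoid, Real.sigmoid_def, neg_mul]
  exact inv_mul_cancel₀ (by positivity)

theorem one_sub_Efun_mul_exp :
    (1 - Efun σ γ x z) * Real.exp (γ / σ * (z + x)) = Efun σ γ x z := by
  rw [Efun]
  field_simp
  ring

variable {σ γ} (δ lam₁ lam₂ m₁ m₂ : ℝ)

theorem belief_drift_eq (hσ : σ ≠ 0) (hγ : γ ≠ 0) :
    γ / σ * (Efun σ γ x z * (1 - Efun σ γ x z))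
          * (mufun σ γ δ m₁ m₂ x z + qfun σ γ δ lam₁ lam₂ m₁ m₂ x z)
        + σ ^ 2 / 2 * ((γ / σ) ^ 2 * (Efun σ γ x z * (1 - Efun σ γ x z) * (1 - 2 * Efun σ γ x z)))
      = lam₂ - (lam₁ + lam₂) * Efun σ γ x z := by
  have hE₀ := Efun_mul_one_add_exp_neg σ γ x z
  have hE₁ := one_sub_Efun_mul_exp σ γ x z
  simp only [mufun, qfun]
  generalize Efun σ γ x z = y at *
  generalize Real.exp (-(γ / σ) * (z + x)) = u at *
  generalize Real.exp (γ / σ * (z + x)) = v at *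
  calc
    _ = y * (1 + u) * ((1 - y) * lam₂ - lam₁ * ((1 - y) * v)) := by
      field_simp
      ring
    _ = lam₂ - (lam₁ + lam₂) * y := by
      rw [hE₀, hE₁]
      ring

end Belief

section ChangeOfVariables

/-- The change of variables `(x, z) ↦ (x, E(x, z))` from the parabolic coordinates to the pair
(inventory, belief). -/
noncomputable def toBelief (σ γ : ℝ) (p : ℝ × ℝ) : ℝ × ℝ := (p.1, Efun σ γ p.1 p.2)

variable {σ γ : ℝ} {F : ℝ × ℝ → ℝ} {p : ℝ × ℝ}

theorem pd1_comp_toBelief (hF : DifferentiableAt ℝ F (toBelief σ γ p)) :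
    pd1 (F ∘ toBelief σ γ) p = pd1 F (toBelief σ γ p)
      + γ / σ * (Efun σ γ p.1 p.2 * (1 - Efun σ γ p.1 p.2)) * pd2 F (toBelief σ γ p) :=
  (hasDerivAt_comp_graph hF (hasDerivAt_Efun_left σ γ p.1 p.2)).deriv

theorem pd2_comp_toBelief (hF : DifferentiableAt ℝ F (toBelief σ γ p)) :
    pd2 (F ∘ toBelief σ γ) p
      = pd2 F (toBelief σ γ p) * (γ / σ * (Efun σ γ p.1 p.2 * (1 - Efun σ γ p.1 p.2))) :=
  (hasDerivAt_comp_snd hF (hasDerivAt_Efun_right σ γ p.1 p.2)).deriv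

theorem pd1_pd1_comp_toBelief (hF : ContDiffAt ℝ 2 F (toBelief σ γ p)) :
    pd1 (pd1 (F ∘ toBelief σ γ)) p = pd1 (pd1 F) (toBelief σ γ p)
      + 2 * (γ / σ * (Efun σ γ p.1 p.2 * (1 - Efun σ γ p.1 p.2))) * pd2 (pd1 F) (toBelief σ γ p)
      + (γ / σ * (Efun σ γ p.1 p.2 * (1 - Efun σ γ p.1 p.2))) ^ 2 * pd2 (pd2 F) (toBelief σ γ p)
      + (γ / σ) ^ 2 * (Efun σ γ p.1 p.2 * (1 - Efun σ γ p.1 p.2) * (1 - 2 * Efun σ γ p.1 p.2))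
        * pd2 F (toBelief σ γ p) :=
  (hasDerivAt_deriv_comp_graph hF (.of_forall fun t => hasDerivAt_Efun_left σ γ t p.2)
    (hasDerivAt_deriv_Efun_left σ γ p.1 p.2)).deriv

end ChangeOfVariables

section Generators

variable (σ γ δ lam₁ lam₂ m₁ m₂ : ℝ)

/-- The operator `μ ∂_x + (σ²/2) ∂_xx + q ∂_z` in the coordinates `p = (x, z)`, in which `z` carries
no noise. -/
noncomputable def parabolicGenerator (f : ℝ × ℝ → ℝ) (p : ℝ × ℝ) : ℝ :=
  mufun σ γ δ m₁ m₂ p.1 p.2 * pd1 f p + (σ ^ 2 / 2) * pd1 (pd1 f) p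
    + qfun σ γ δ lam₁ lam₂ m₁ m₂ p.1 p.2 * pd2 f p

/-- The degenerate generator `L` of the pair (inventory, belief), in the coordinates `p = (x, y)`.
The mixed term `F_xy` is read as `∂_y ∂_x F`. -/
noncomputable def beliefGenerator (F : ℝ × ℝ → ℝ) (p : ℝ × ℝ) : ℝ :=
  (mfun m₁ m₂ p.2 - δ * p.1) * pd1 F p + (σ ^ 2 / 2) * pd1 (pd1 F) p
    + (lam₂ - (lam₁ + lam₂) * p.2) * pd2 F p
    + (γ ^ 2 / 2) * p.2 ^ 2 * (1 - p.2) ^ 2 * pd2 (pd2 F) p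
    + σ * γ * p.2 * (1 - p.2) * pd2 (pd1 F) p

variable {σ γ}

theorem statement5_general (hσ : σ ≠ 0) (hγ : γ ≠ 0) {F : ℝ × ℝ → ℝ} {p : ℝ × ℝ}
    (hF : ContDiffAt ℝ 2 F (toBelief σ γ p)) :
    parabolicGenerator σ γ δ lam₁ lam₂ m₁ m₂ (F ∘ toBelief σ γ) p
      = beliefGenerator σ γ δ lam₁ lam₂ m₁ m₂ F (toBelief σ γ p) := by
  have hF₁ := hF.differentiableAt two_ne_zero
  rw [parabolicGenerator, pd1_comp_toBelief hF₁, pd1_pd1_comp_toBelief hF, pd2_comp_toBelief hF₁]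
  simp only [beliefGenerator, toBelief, ← belief_drift_eq p.1 p.2 δ lam₁ lam₂ m₁ m₂ hσ hγ]
  rw [mufun]
  field_simp
  ring

end Generators

theorem statement5 (σ γ δ lam₁ lam₂ m₁ m₂ : ℝ)
    (hσ : 0 < σ) (hγ : 0 < γ) (hδ : 0 < δ) (hlam₁ : 0 < lam₁) (hlam₂ : 0 < lam₂)
    (hm : m₂ < m₁)
    (F : ℝ × ℝ → ℝ) (hF : ContDiffOn ℝ 2 F (Set.univ ×ˢ Set.Ioo (0 : ℝ) 1))
    (f : ℝ × ℝ → ℝ) (hf : ∀ x z : ℝ, f (x, z) = F (x, Efun σ γ x z)) :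
    ∀ x z : ℝ,
      mufun σ γ δ m₁ m₂ x z * pd1 f (x, z) + (σ ^ 2 / 2) * pd1 (pd1 f) (x, z)
          + qfun σ γ δ lam₁ lam₂ m₁ m₂ x z * pd2 f (x, z)
        = (mfun m₁ m₂ (Efun σ γ x z) - δ * x) * pd1 F (x, Efun σ γ x z)
          + (σ ^ 2 / 2) * pd1 (pd1 F) (x, Efun σ γ x z)
          + (lam₂ - (lam₁ + lam₂) * Efun σ γ x z) * pd2 F (x, Efun σ γ x z)
          + (γ ^ 2 / 2) * (Efun σ γ x z) ^ 2 * (1 - Efun σ γ x z) ^ 2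
            * pd2 (pd2 F) (x, Efun σ γ x z)
          + σ * γ * Efun σ γ x z * (1 - Efun σ γ x z) * pd2 (pd1 F) (x, Efun σ γ x z) := by
  obtain rfl : f = F ∘ toBelief σ γ := funext fun p => hf p.1 p.2
  intro x z
  have hF_at : ContDiffAt ℝ 2 F (toBelief σ γ (x, z)) :=
    hF.contDiffAt ((isOpen_univ.prod isOpen_Ioo).mem_nhds ⟨trivial, Efun_mem_Ioo σ γ x z⟩)
  simpa only [parabolicGenerator, beliefGenerator, toBelief] using
    statement5_general δ lam₁ lam₂ m₁ m₂ hσ.ne' hγ.ne' hF_at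
end

section
/- Fix γ > 0, λ₁ > 0, λ₂ > 0. Define m′ : (0,1) → ℝ by m′(x) := (2/(γ²x²(1−x)²)) · exp( 2·∫_{1/2}^x (λ₂ − (λ₁+λ₂)y)/(γ²y²(1−y)²) dy ). Then m′ is Lebesgue integrable on the interval (0,1), i.e. ∫₀¹ m′(x) dx < ∞. -/
open MeasureTheory

/-!
Put `A = 2λ₂/γ²` and `B = 2λ₁/γ²`. By partial fractions the exponent of `m'` is, up to a constant,
`(A - B) log (x / (1 - x)) - A / x - B / (1 - x)`, so `m'` is a constant multiple of
`x ^ (A - B - 2) * exp (-A / x) * (1 - x) ^ (B - A - 2) * exp (-B / (1 - x))`.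
At each endpoint the exponential beats the power, whatever its exponent. Hence `m'` extends
continuously by zero to `[0, 1]`.
-/

open Set Filter Topology Real

theorem integrableOn_Ioo_of_tendsto {X E : Type*} [ConditionallyCompleteLinearOrder X]
    [DenselyOrdered X] [TopologicalSpace X] [OrderTopology X] [MeasurableSpace X]
    [OpensMeasurableSpace X] [NormedAddCommGroup E] {μ : Measure X}
    [IsFiniteMeasureOnCompacts μ] {f : X → E} {a b : X} {la lb : E}
    (hf : ContinuousOn f (Ioo a b)) (ha : Tendsto f (𝓝[>] a) (𝓝 la))
    (hb : Tendsto f (𝓝[<] b) (𝓝 lb)) : IntegrableOn f (Ioo a b) μ := by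
  have hext : IntegrableOn (extendFrom (Ioo a b) f) (Ioo a b) μ :=
    ((continuousOn_Icc_extendFrom_Ioo hf ha hb).integrableOn_Icc).mono_set Ioo_subset_Icc_self
  refine hext.congr_fun (fun x hx ↦ ?_) measurableSet_Ioo
  exact extendFrom_eq (subset_closure hx) (hf x hx)

/-- The kernel `x ^ p * exp (-A / x)` of the inverse gamma density with shape `-p - 1` and
scale `A`; it describes the behaviour of the speed density at each end of `(0, 1)`. -/
noncomputable def invGammaKernel (p A x : ℝ) : ℝ :=
  x ^ p * exp (-A / x)

theorem continuousOn_invGammaKernel (p A : ℝ) : ContinuousOn (invGammaKernel p A) (Ioi 0) := by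
  intro x hx
  have hx0 : x ≠ 0 := ne_of_gt hx
  unfold invGammaKernel
  exact ((continuousAt_rpow_const x p (.inl hx0)).mul
    (continuousAt_const.div continuousAt_id hx0).rexp).continuousWithinAt

theorem tendsto_invGammaKernel_nhdsGT_zero (p : ℝ) {A : ℝ} (hA : 0 < A) :
    Tendsto (invGammaKernel p A) (𝓝[>] 0) (𝓝 0) := by
  refine ((tendsto_rpow_mul_exp_neg_mul_atTop_nhds_zero (-p) A hA).comp
    tendsto_inv_nhdsGT_zero).congr fun x ↦ ?_
  simp only [Function.comp_apply, invGammaKernel, rpow_neg_eq_inv_rpow, inv_inv, div_eq_mul_inv]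

theorem continuousOn_invGammaKernel_mul_reflect (p q A B : ℝ) :
    ContinuousOn (fun x ↦ invGammaKernel p A x * invGammaKernel q B (1 - x)) (Ioo 0 1) :=
  ((continuousOn_invGammaKernel p A).mono Ioo_subset_Ioi_self).mul <|
    (continuousOn_invGammaKernel q B).comp (by fun_prop) fun _ hx ↦ sub_pos.2 hx.2

theorem tendsto_invGammaKernel_mul_reflect_nhdsGT_zero (p q B : ℝ) {A : ℝ} (hA : 0 < A) :
    Tendsto (fun x ↦ invGammaKernel p A x * invGammaKernel q B (1 - x)) (𝓝[>] 0) (𝓝 0) := by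
  have hreflect : Tendsto (fun x : ℝ ↦ 1 - x) (𝓝[>] 0) (𝓝 1) :=
    tendsto_nhdsWithin_of_tendsto_nhds (Continuous.tendsto' (by fun_prop) 0 1 (sub_zero 1))
  have hone : ContinuousAt (invGammaKernel q B) 1 :=
    (continuousOn_invGammaKernel q B).continuousAt (Ioi_mem_nhds one_pos)
  simpa only [zero_mul, Function.comp_apply] using
    (tendsto_invGammaKernel_nhdsGT_zero p hA).mul (hone.tendsto.comp hreflect)

theorem integrableOn_invGammaKernel_mul_reflect (p q : ℝ) {A B : ℝ} (hA : 0 < A) (hB : 0 < B) :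
    IntegrableOn (fun x ↦ invGammaKernel p A x * invGammaKernel q B (1 - x)) (Ioo 0 1) := by
  have hreflect : Tendsto (fun x : ℝ ↦ 1 - x) (𝓝[<] 1) (𝓝[>] 0) := by
    refine tendsto_nhdsWithin_iff.2 ⟨tendsto_nhdsWithin_of_tendsto_nhds
      (Continuous.tendsto' (by fun_prop) 1 0 (sub_self 1)), ?_⟩
    filter_upwards [self_mem_nhdsWithin] with x (hx : x < 1) using sub_pos.2 hx
  have hright : Tendsto (fun x ↦ invGammaKernel p A x * invGammaKernel q B (1 - x))
      (𝓝[<] 1) (𝓝 0) := by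
    simpa only [Function.comp_def, sub_sub_cancel, mul_comm] using
      (tendsto_invGammaKernel_mul_reflect_nhdsGT_zero q p A hB).comp hreflect
  exact integrableOn_Ioo_of_tendsto (continuousOn_invGammaKernel_mul_reflect p q A B)
    (tendsto_invGammaKernel_mul_reflect_nhdsGT_zero p q B hA) hright

/-- A primitive on `(0, 1)` of `y ↦ (A - (A + B) * y) / (y ^ 2 * (1 - y) ^ 2)`, which is twice the
drift of the filter diffusion divided by its squared volatility when `A = 2λ₂/γ²` and
`B = 2λ₁/γ²`. -/
noncomputable def speedPotential (A B y : ℝ) : ℝ :=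
  (A - B) * (log y - log (1 - y)) + -A / y + -B / (1 - y)

theorem hasDerivAt_speedPotential (A B : ℝ) {y : ℝ} (h₀ : y ≠ 0) (h₁ : 1 - y ≠ 0) :
    HasDerivAt (speedPotential A B) ((A - (A + B) * y) / (y ^ 2 * (1 - y) ^ 2)) y := by
  have hreflect : HasDerivAt (fun y : ℝ ↦ 1 - y) (-1) y := (hasDerivAt_id' y).const_sub 1
  have hderiv := ((((hasDerivAt_log h₀).sub (hreflect.log h₁)).const_mul (A - B)).add
    ((hasDerivAt_const y (-A)).div (hasDerivAt_id' y) h₀)).add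
    ((hasDerivAt_const y (-B)).div hreflect h₁)
  refine hderiv.congr_deriv ?_
  field_simp
  ring

theorem integral_eq_speedPotential_sub (A B : ℝ) {c x : ℝ} (hc : c ∈ Ioo (0 : ℝ) 1)
    (hx : x ∈ Ioo (0 : ℝ) 1) :
    ∫ y in c..x, (A - (A + B) * y) / (y ^ 2 * (1 - y) ^ 2) =
      speedPotential A B x - speedPotential A B c := by
  have hne : ∀ y ∈ uIcc c x, y ≠ 0 ∧ 1 - y ≠ 0 := fun y hy ↦
    have hy01 := ordConnected_Ioo.uIcc_subset hc hx hy
    ⟨hy01.1.ne', (sub_pos.2 hy01.2).ne'⟩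
  refine intervalIntegral.integral_eq_sub_of_hasDerivAt
    (fun y hy ↦ hasDerivAt_speedPotential A B (hne y hy).1 (hne y hy).2)
    (ContinuousOn.intervalIntegrable ?_)
  refine ContinuousOn.div (by fun_prop) (by fun_prop) fun y hy ↦ ?_
  exact mul_ne_zero (pow_ne_zero 2 (hne y hy).1) (pow_ne_zero 2 (hne y hy).2)

theorem exp_speedPotential_div_eq_invGammaKernel_mul (A B : ℝ) {x : ℝ}
    (hx : x ∈ Ioo (0 : ℝ) 1) :
    exp (speedPotential A B x) / (x ^ 2 * (1 - x) ^ 2) =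
      invGammaKernel (A - B - 2) A x * invGammaKernel (B - A - 2) B (1 - x) := by
  have h₀ : 0 < x := hx.1
  have h₁ : 0 < 1 - x := sub_pos.2 hx.2
  have hexp : exp (speedPotential A B x) =
      x ^ (A - B) * (1 - x) ^ (B - A) * exp (-A / x) * exp (-B / (1 - x)) := by
    rw [rpow_def_of_pos h₀, rpow_def_of_pos h₁, ← exp_add, ← exp_add, ← exp_add, speedPotential]
    ring_nf
  rw [hexp, invGammaKernel, invGammaKernel, rpow_sub h₀ (A - B), rpow_sub h₁ (B - A), rpow_two,
    rpow_two]
  field_simp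

theorem integrableOn_exp_integral_div {A B c : ℝ} (hA : 0 < A) (hB : 0 < B)
    (hc : c ∈ Ioo (0 : ℝ) 1) :
    IntegrableOn (fun x ↦ exp (∫ y in c..x, (A - (A + B) * y) / (y ^ 2 * (1 - y) ^ 2)) /
      (x ^ 2 * (1 - x) ^ 2)) (Ioo 0 1) := by
  have hkernel : IntegrableOn (fun x ↦ invGammaKernel (A - B - 2) A x *
      invGammaKernel (B - A - 2) B (1 - x) / exp (speedPotential A B c)) (Ioo 0 1) :=
    (integrableOn_invGammaKernel_mul_reflect (A - B - 2) (B - A - 2) hA hB).div_const _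
  refine hkernel.congr_fun (fun x hx ↦ ?_) measurableSet_Ioo
  simp only [← exp_speedPotential_div_eq_invGammaKernel_mul A B hx,
    integral_eq_speedPotential_sub A B hc hx, exp_sub, div_right_comm]

theorem statement11 (γ lam₁ lam₂ : ℝ) (hγ : 0 < γ) (hlam₁ : 0 < lam₁) (hlam₂ : 0 < lam₂)
    (m' : ℝ → ℝ)
    (hm' : ∀ x ∈ Set.Ioo (0 : ℝ) 1,
      m' x = (2 / (γ ^ 2 * x ^ 2 * (1 - x) ^ 2))
        * Real.exp (2 * ∫ y in (1 / 2 : ℝ)..x,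
            (lam₂ - (lam₁ + lam₂) * y) / (γ ^ 2 * y ^ 2 * (1 - y) ^ 2))) :
    IntegrableOn m' (Set.Ioo (0 : ℝ) 1) volume := by
  set A := 2 * lam₂ / γ ^ 2 with hA
  set B := 2 * lam₁ / γ ^ 2 with hB
  have hdensity : IntegrableOn (fun x ↦ 2 / γ ^ 2 *
      (exp (∫ y in (1 / 2 : ℝ)..x, (A - (A + B) * y) / (y ^ 2 * (1 - y) ^ 2)) /
        (x ^ 2 * (1 - x) ^ 2))) (Ioo 0 1) :=
    (integrableOn_exp_integral_div (by positivity) (by positivity) (by norm_num)).const_mul _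
  refine hdensity.congr_fun (fun x hx ↦ ?_) measurableSet_Ioo
  have hscale (y : ℝ) : 2 * ((lam₂ - (lam₁ + lam₂) * y) / (γ ^ 2 * y ^ 2 * (1 - y) ^ 2)) =
      (A - (A + B) * y) / (y ^ 2 * (1 - y) ^ 2) := by
    rw [mul_assoc, ← div_div, hA, hB]
    ring
  simp only [hm' x hx, ← intervalIntegral.integral_const_mul, hscale]
  rw [mul_assoc (γ ^ 2), div_mul_div_comm, div_mul_eq_mul_div]
end
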